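/- Let k be an odd positive integer with k ≥ 3, i a positive integer with gcd(i,k) = 1, t a natural number with 0 ≤ t ≤ k−1, e = (2^i + 1)·2^t, F = GaloisField 2 k, and α ∈ F with α ≠ 0 and α ≠ 1. Define V : F × F → F × F by V(x,y) = ((αx + y)^e + x^e, (x + αy)^e + y^e), with components V₁, V₂, and for a, b, c, d ∈ F let W((a,b),(c,d)) = Σ_{x,y ∈ F} χ(Tr(c·V₁(x,y) + d·V₂(x,y) + a·x + b·y)). Then the set of absolute values {|W((a,b),(c,d))| : a, b ∈ F, (c,d) ≠ (0,0)} equals exactly {0, 2^k, 2^(k+1)}; i.e., each of the values 0, 2^k and 2^(k+1) is attained at some ((a,b),(c,d)) with (c,d) ≠ (0,0), and no other absolute values occur. -/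

import Mathlib

noncomputable instance (k : ℕ) : Fintype (GaloisField 2 k) := Fintype.ofFinite _

/-- The absolute trace `Tr(x) = x + x^2 + ⋯ + x^(2^(k-1))` of `GaloisField 2 k`,
computed inside the field (its values lie in the prime subfield `{0, 1}`). -/
noncomputable def absTrace (k : ℕ) (x : GaloisField 2 k) : GaloisField 2 k :=
  ∑ j ∈ Finset.range k, x ^ 2 ^ j

/-- The Walsh transform `W((a,b),(c,d)) = Σ_{x,y} χ(Tr(c·V₁(x,y) + d·V₂(x,y) + ax + by))`
of the closed butterfly `V(x,y) = ((αx+y)^e + x^e, (x+αy)^e + y^e)`, where `χ(0) = 1`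
and `χ(1) = -1`. -/
noncomputable def butterflyWalsh (k e : ℕ) (α a b c d : GaloisField 2 k) : ℤ :=
  haveI := Classical.decEq (GaloisField 2 k)
  ∑ x : GaloisField 2 k, ∑ y : GaloisField 2 k,
    if absTrace k (c * ((α * x + y) ^ e + x ^ e) + d * ((x + α * y) ^ e + y ^ e)
        + a * x + b * y) = 0 then 1 else -1


section Abstract

set_option linter.unusedSimpArgs false
set_option linter.unusedSectionVars false
open scoped Matrix

variable {F : Type*} [Field F] [CharP F 2] (σ : F →+* F)

lemma bf_add_self (x : F) : x + x = 0 := CharTwo.add_self_eq_zero x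

lemma bf_eq_of_add {x y : F} (h : x + y = 0) : x = y := by
  have := bf_add_self y
  linear_combination h - this

/-- fixed points of `σ²` are in the prime field. -/
lemma bf_fix2 {k : ℕ} (hk : Odd k) (hσ : ∀ x, σ^[k] x = x)
    (hfix : ∀ x, σ x = x → x = 0 ∨ x = 1) (x : F) (hx : σ (σ x) = x) : x = 0 ∨ x = 1 := by
  apply hfix
  obtain ⟨m, rfl⟩ := hk
  have h2 : ∀ n, σ^[2 * n] x = x := by
    intro n
    rw [Function.iterate_mul]
    exact Function.iterate_fixed (by simpa using hx) n
  have := hσ x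
  rw [← Nat.succ_eq_add_one, Function.iterate_succ_apply', h2] at this
  exact this

lemma bf_factor (hfix2 : ∀ x, σ (σ x) = x → x = 0 ∨ x = 1) (s : F) (h0 : s ≠ 0) (h1 : s ≠ 1) :
    s * σ s ^ 2 * σ (σ s) + (s + σ s) * (σ s + σ (σ s)) ≠ 0 := by
  intro h
  have hs' : σ s ≠ 0 := by simpa using h0
  have hs'' : σ (σ s) ≠ 0 := by simpa using h0
  set A : F := s⁻¹ + (σ s)⁻¹ with hA
  have hsA : σ A = (σ s)⁻¹ + (σ (σ s))⁻¹ := by simp [hA]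
  have hAA : A * σ A = 1 := by
    rw [hsA, hA]
    field_simp
    have := bf_add_self (s * σ s ^ 2 * σ (σ s))
    linear_combination h - this
  have hAA' : σ A * σ (σ A) = 1 := by
    have := congrArg σ hAA
    simpa using this
  have hne : σ A ≠ 0 := by rintro h; simp [h] at hAA
  have : σ (σ A) = A := by
    apply mul_left_cancel₀ hne
    rw [hAA', mul_comm, hAA]
  have hA1 : A = 1 := by
    rcases hfix2 A this with h | h
    · simp [h] at hAA
    · exact h
  have hinv : σ (s⁻¹) = s⁻¹ + 1 := by
    rw [map_inv₀]
    have := bf_add_self (s⁻¹)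
    linear_combination hA1 - hA - this
  rcases hfix2 s⁻¹ (by
    rw [hinv, map_add, map_one, hinv]
    have := bf_add_self (1 : F)
    linear_combination this) with h | h
  · exact h0 (by simpa using h)
  · exact h1 (by simpa using h)

def bfC (a b : F) : Matrix (Fin 2) (Fin 2) F := !![a, 1; a * b + 1, b]
def bfD (a b : F) : Matrix (Fin 2) (Fin 2) F := !![b, a * b + 1; 1, a]

/-- the four products, as the rows of a 4 × 4 matrix -/
def bfQ (s t r : F) : Matrix (Fin 4) (Fin 4) F :=
  !![1, 0, s + r, 1;
     t * t + 1, s * t ^ 2 + t + s, t ^ 2 * r + t + r, (t * r + 1) * (s * t + 1) + r * s;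
     (t * r + 1) * (s * t + 1) + r * s, t ^ 2 * r + t + r, s * t ^ 2 + t + s, t * t + 1;
     1, s + r, 0, 1]

lemma bfQ_det (s t r : F) : (bfQ s t r).det =
    (s + r) ^ 2 * (s * t ^ 2 * r + (s + t) * (t + r)) ^ 2 := by
  have h2 : (2 : F) = 0 := CharTwo.two_eq_zero
  simp [bfQ, Matrix.det_succ_row_zero, Fin.sum_univ_succ, Fin.succAbove]
  grind

def bfM (c d a b : F) : Matrix (Fin 2) (Fin 2) F := c • bfC a b + d • bfD a b

lemma bf_trace_span {s t r : F} (hdet : (bfQ s t r).det ≠ 0) (Z : Matrix (Fin 2) (Fin 2) F)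
    (h1 : (Z * (bfC t r * bfC s t)).trace = 0) (h2 : (Z * (bfC t r * bfD s t)).trace = 0)
    (h3 : (Z * (bfD t r * bfC s t)).trace = 0) (h4 : (Z * (bfD t r * bfD s t)).trace = 0) :
    Z = 0 := by
  have h22 : (2 : F) = 0 := CharTwo.two_eq_zero
  have key : bfQ s t r *ᵥ ![Z 0 0, Z 1 0, Z 0 1, Z 1 1] = 0 := by
    simp [Matrix.trace, Matrix.mul_apply, Fin.sum_univ_two, bfC, bfD] at h1 h2 h3 h4
    ext j
    fin_cases j
    · simp [bfQ, Matrix.mulVec, dotProduct, Fin.sum_univ_succ]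
      linear_combination h1 - (Z 0 0 * s * t + Z 1 0 * t + Z 0 1 * s * t * r + Z 1 1 * t * r) * h22
    · simp [bfQ, Matrix.mulVec, dotProduct, Fin.sum_univ_succ]
      linear_combination h2
    · simp [bfQ, Matrix.mulVec, dotProduct, Fin.sum_univ_succ]
      linear_combination h3
    · simp [bfQ, Matrix.mulVec, dotProduct, Fin.sum_univ_succ]
      linear_combination h4 - (Z 0 0 * t * r + Z 1 0 * s * t * r + Z 0 1 * t + Z 1 1 * s * t) * h22
  have := Matrix.eq_zero_of_mulVec_eq_zero hdet key
  ext i j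
  fin_cases i <;> fin_cases j
  · simpa using congrFun this 0
  · simpa using congrFun this 2
  · simpa using congrFun this 1
  · simpa using congrFun this 3

lemma bf_mul_span {s t r : F} (hdet : (bfQ s t r).det ≠ 0) (Z : Matrix (Fin 2) (Fin 2) F)
    (h1 : Z * (bfC t r * bfC s t) = 0) (h2 : Z * (bfC t r * bfD s t) = 0)
    (h3 : Z * (bfD t r * bfC s t) = 0) (h4 : Z * (bfD t r * bfD s t) = 0) :
    Z = 0 := by
  have key : ∀ Y : Matrix (Fin 2) (Fin 2) F, Y * Z = 0 := by
    intro Y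
    apply bf_trace_span hdet <;> rw [Matrix.mul_assoc] <;> simp [h1, h2, h3, h4]
  simpa using key 1

lemma bf_M_mul_ne {s t r : F} (hdet : (bfQ s t r).det ≠ 0) {c d : F} (hcd : ¬ (c = 0 ∧ d = 0)) :
    bfM (σ c) (σ d) t r * bfM c d s t ≠ 0 := by
  intro h
  have h22 : (2 : F) = 0 := CharTwo.two_eq_zero
  have key : ![σ c * c, σ c * d, σ d * c, σ d * d] ᵥ* bfQ s t r = 0 := by
    have e1 := congrFun (congrFun h 0) 0
    have e2 := congrFun (congrFun h 0) 1
    have e3 := congrFun (congrFun h 1) 0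
    have e4 := congrFun (congrFun h 1) 1
    simp [Matrix.mul_apply, Fin.sum_univ_two, bfC, bfD, bfM] at e1 e2 e3 e4
    ext j
    fin_cases j
    · simp [bfQ, Matrix.vecMul, dotProduct, Fin.sum_univ_succ]
      grind
    · simp [bfQ, Matrix.vecMul, dotProduct, Fin.sum_univ_succ]
      grind
    · simp [bfQ, Matrix.vecMul, dotProduct, Fin.sum_univ_succ]
      grind
    · simp [bfQ, Matrix.vecMul, dotProduct, Fin.sum_univ_succ]
      grind
  have := Matrix.eq_zero_of_vecMul_eq_zero hdet key
  have hc : σ c * c = 0 := by simpa using congrFun this 0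
  have hd : σ d * d = 0 := by simpa using congrFun this 3
  apply hcd
  constructor
  · rcases mul_eq_zero.1 hc with h | h
    · simpa using h
    · exact h
  · rcases mul_eq_zero.1 hd with h | h
    · simpa using h
    · exact h

/-- The radical equations of the component `(c,d)`. -/
def bfRad (s c d : F) (x y : F) : Prop :=
  σ (c * (s * σ s + 1) + d) * σ (σ x) + σ (c * s + d * σ s) * σ (σ y)
    = (c * (s * σ s + 1) + d) * x + (c * σ s + d * s) * y ∧
  σ (c * σ s + d * s) * σ (σ x) + σ (c + d * (s * σ s + 1)) * σ (σ y)
    = (c * s + d * σ s) * x + (c + d * (s * σ s + 1)) * y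

lemma bf_rad_step {s c d x y : F} (h : bfRad σ s c d x y) :
    bfM (σ c) (σ d) (σ s) (σ (σ s)) *ᵥ (bfM c d s (σ s) *ᵥ ![x, y])
      = σ (bfM c d s (σ s)).det • ![σ (σ x), σ (σ y)] := by
  obtain ⟨h1, h2⟩ := h
  have h22 : (2 : F) = 0 := CharTwo.two_eq_zero
  simp only [map_add, map_mul, map_one] at h1 h2
  ext j
  fin_cases j
  · simp [bfM, bfC, bfD, Matrix.mulVec, dotProduct, Fin.sum_univ_two, Matrix.det_fin_two]
    grind
  · simp [bfM, bfC, bfD, Matrix.mulVec, dotProduct, Fin.sum_univ_two, Matrix.det_fin_two]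
    grind

lemma bf_rank_one {n11 n12 n21 n22 x y x' y' : F} (hxy : ¬ (x = 0 ∧ y = 0))
    (hx' : x = 0 ↔ x' = 0) (hy' : y = 0 ↔ y' = 0)
    (h1 : n11 * x + n12 * y = 0) (h2 : n21 * x + n22 * y = 0)
    (h3 : n11 * x' + n21 * y' = 0) (h4 : n12 * x' + n22 * y' = 0) :
    ∃ τ, n11 = τ * y' * y ∧ n12 = τ * y' * x ∧ n21 = τ * x' * y ∧ n22 = τ * x' * x := by
  have h22 : (2 : F) = 0 := CharTwo.two_eq_zero
  by_cases hx : x = 0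
  · have hy : y ≠ 0 := fun h => hxy ⟨hx, h⟩
    have hy2 : y' ≠ 0 := fun h => hy (hy'.2 h)
    have hx2 := hx'.1 hx
    subst hx hx2
    refine ⟨n11 / (y' * y), ?_, ?_, ?_, ?_⟩
    · field_simp
    · simpa [hy] using h1
    · simpa [hy2] using h3
    · simpa [hy] using h2
  · have hx2 : x' ≠ 0 := fun h => hx (hx'.2 h)
    refine ⟨n22 / (x' * x), ?_, ?_, ?_, ?_⟩
    · field_simp
      grind
    · field_simp
      grind
    · field_simp
      grind
    · field_simp

lemma bf_rad_degenerate {s c d x y : F}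
    (hdet : (bfQ s (σ s) (σ (σ s))).det ≠ 0) (hcd : ¬ (c = 0 ∧ d = 0))
    (h0 : (bfM c d s (σ s)).det = 0)
    (h : bfRad σ s c d x y) : x = 0 ∧ y = 0 := by
  have hne := bf_M_mul_ne σ hdet hcd
  have hst := bf_rad_step σ h
  rw [h0] at hst
  obtain ⟨h1, h2⟩ := h
  have h22 : (2 : F) = 0 := CharTwo.two_eq_zero
  by_contra hxy
  have hM : bfM c d s (σ s) = !![c * s + d * σ s, c + d * (s * σ s + 1);
      c * (s * σ s + 1) + d, c * σ s + d * s] := by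
    ext i j
    fin_cases i <;> fin_cases j <;> simp [bfM, bfC, bfD]
  have hM' : bfM (σ c) (σ d) (σ s) (σ (σ s)) =
      !![σ (c * s + d * σ s), σ (c + d * (s * σ s + 1));
      σ (c * (s * σ s + 1) + d), σ (c * σ s + d * s)] := by
    ext i j
    fin_cases i <;> fin_cases j <;> simp [bfM, bfC, bfD]
  rw [hM, hM'] at hne hst
  rw [hM] at h0
  generalize c * s + d * σ s = n21 at *
  generalize c + d * (s * σ s + 1) = n22 at *
  generalize c * (s * σ s + 1) + d = n11 at *
  generalize c * σ s + d * s = n12 at *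
  have hz : σ 0 • ![σ (σ x), σ (σ y)] = 0 := by simp
  rw [hz] at hst
  rw [Matrix.det_fin_two] at h0
  simp at h0
  have g1 := congrFun hst 0
  have g2 := congrFun hst 1
  simp [Matrix.mulVec, dotProduct, Fin.sum_univ_two] at g1 g2
  have hw : n21 * x + n22 * y = 0 ∧ n11 * x + n12 * y = 0 := by
    by_contra hw
    apply hne
    by_cases hw1 : n21 * x + n22 * y = 0
    · have hw2 : n11 * x + n12 * y ≠ 0 := fun h => hw ⟨hw1, h⟩
      ext i j
      apply mul_left_cancel₀ hw2
      fin_cases i <;> fin_cases j <;> simp [Matrix.mul_apply, Fin.sum_univ_two] <;> grind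
    · ext i j
      apply mul_left_cancel₀ hw1
      fin_cases i <;> fin_cases j <;> simp [Matrix.mul_apply, Fin.sum_univ_two] <;> grind
  obtain ⟨hw2, hw1⟩ := hw
  rw [hw1] at h1
  rw [hw2] at h2
  have k1 : n11 * σ x + n21 * σ y = 0 := by
    apply σ.injective
    simpa using h1
  have k2 : n12 * σ x + n22 * σ y = 0 := by
    apply σ.injective
    simpa using h2
  obtain ⟨τ, r1, r2, r3, r4⟩ := bf_rank_one hxy (by simp) (by simp) hw1 hw2 k1 k2
  apply hne
  ext i j
  rw [r1, r2, r3, r4]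
  fin_cases i <;> fin_cases j <;> simp [Matrix.mul_apply, Fin.sum_univ_two] <;> grind

end Abstract
section Abstract2

set_option linter.unusedSimpArgs false
set_option linter.unusedSectionVars false
open scoped Matrix

variable {F : Type*} [Field F] [CharP F 2] (σ : F →+* F)

lemma bf_det_ne (hfix2 : ∀ x, σ (σ x) = x → x = 0 ∨ x = 1) (s : F) (h0 : s ≠ 0) (h1 : s ≠ 1) :
    (bfQ s (σ s) (σ (σ s))).det ≠ 0 := by
  rw [bfQ_det]
  refine mul_ne_zero (pow_ne_zero _ ?_) (pow_ne_zero _ (bf_factor σ hfix2 s h0 h1))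
  intro h
  rcases hfix2 s (bf_eq_of_add h).symm with h | h
  · exact h0 h
  · exact h1 h

/-- solutions of a first order system over `σ²` -/
lemma bf_lin_card [DecidableEq F] (hfix2 : ∀ x, σ (σ x) = x → x = 0 ∨ x = 1) (p q r w : F) :
    ∃ S : Finset (F × F), S.card ≤ 4 ∧ ∀ x y : F, σ (σ x) = p * x + q * y →
      σ (σ y) = r * x + w * y → (x, y) ∈ S := by
  have h22 : (2 : F) = 0 := CharTwo.two_eq_zero
  by_cases hex : ∃ x1 y1 x2 y2 : F, x1 * y2 + x2 * y1 ≠ 0 ∧ σ (σ x1) = p * x1 + q * y1 ∧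
      σ (σ y1) = r * x1 + w * y1 ∧ σ (σ x2) = p * x2 + q * y2 ∧ σ (σ y2) = r * x2 + w * y2
  · obtain ⟨x1, y1, x2, y2, hΔ, a1, b1, a2, b2⟩ := hex
    refine ⟨{(0, 0), (x1, y1), (x2, y2), (x1 + x2, y1 + y2)}, Finset.card_le_four, ?_⟩
    intro x y hx hy
    set l := (x * y2 + x2 * y) / (x1 * y2 + x2 * y1) with hl
    set m := (x1 * y + x * y1) / (x1 * y2 + x2 * y1) with hm
    have ex : x = l * x1 + m * x2 := by
      rw [hl, hm]; field_simp; grind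
    have ey : y = l * y1 + m * y2 := by
      rw [hl, hm]; field_simp; grind
    clear_value l m
    have hΔ' : σ (σ x1) * σ (σ y2) + σ (σ x2) * σ (σ y1) ≠ 0 := by
      intro h
      apply hΔ
      apply σ.injective; apply σ.injective
      simpa using h
    have f1 : (σ (σ l) + l) * σ (σ x1) + (σ (σ m) + m) * σ (σ x2) = 0 := by
      have := hx
      rw [ex, ey] at this
      simp only [map_add, map_mul] at this
      grind
    have f2 : (σ (σ l) + l) * σ (σ y1) + (σ (σ m) + m) * σ (σ y2) = 0 := by
      have := hy
      rw [ex, ey] at this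
      simp only [map_add, map_mul] at this
      grind
    have g1 : σ (σ l) + l = 0 := by
      apply mul_right_cancel₀ hΔ'
      linear_combination σ (σ y2) * f1 - σ (σ x2) * f2 + h22 * (σ (σ l) + l) * (σ (σ x2) * σ (σ y1))
    have g2 : σ (σ m) + m = 0 := by
      apply mul_right_cancel₀ hΔ'
      linear_combination σ (σ x1) * f2 - σ (σ y1) * f1 + h22 * (σ (σ m) + m) * (σ (σ x2) * σ (σ y1))
    rcases hfix2 l (bf_eq_of_add g1) with rfl | rfl <;>
      rcases hfix2 m (bf_eq_of_add g2) with rfl | rfl <;> simp [ex, ey]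
  · push Not at hex
    by_cases hex1 : ∃ x1 y1 : F, (x1, y1) ≠ (0, 0) ∧ σ (σ x1) = p * x1 + q * y1 ∧
        σ (σ y1) = r * x1 + w * y1
    · obtain ⟨x1, y1, hne, a1, b1⟩ := hex1
      refine ⟨{(0, 0), (x1, y1)}, Finset.card_le_two.trans (by norm_num), ?_⟩
      intro x y hx hy
      have hD : x1 * y + x * y1 = 0 := by
        by_contra hD
        exact hex x1 y1 x y hD a1 b1 hx hy
      obtain ⟨l, ex, ey⟩ : ∃ l, x = l * x1 ∧ y = l * y1 := by
        by_cases hx1 : x1 = 0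
        · have hy1 : y1 ≠ 0 := by rintro rfl; exact hne (by rw [hx1])
          refine ⟨y / y1, ?_, by field_simp⟩
          subst hx1
          simpa [hy1] using hD
        · refine ⟨x / x1, by field_simp, ?_⟩
          field_simp
          grind
      have g1 : σ (σ l) = l := by
        have hx' := hx
        have hy' := hy
        rw [ex, ey] at hx' hy'
        simp only [map_mul] at hx' hy'
        by_cases hx1 : x1 = 0
        · have hy1 : y1 ≠ 0 := by rintro rfl; exact hne (by rw [hx1])
          have : σ (σ y1) ≠ 0 := by simpa using hy1
          apply mul_right_cancel₀ this
          rw [hy', b1]; ring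
        · have : σ (σ x1) ≠ 0 := by simpa using hx1
          apply mul_right_cancel₀ this
          rw [hx', a1]; ring
      rcases hfix2 l g1 with rfl | rfl <;> simp [ex, ey]
    · push Not at hex1
      refine ⟨{(0, 0)}, by simp, ?_⟩
      intro x y hx hy
      by_contra hne
      exact hex1 x y (by simpa using hne) hx hy

lemma bf_rad_card [DecidableEq F] (hfix2 : ∀ x, σ (σ x) = x → x = 0 ∨ x = 1) (s c d : F)
    (h0 : s ≠ 0) (h1 : s ≠ 1) (hcd : ¬ (c = 0 ∧ d = 0)) :
    ∃ S : Finset (F × F), S.card ≤ 4 ∧ ∀ x y : F, bfRad σ s c d x y → (x, y) ∈ S := by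
  have hdet := bf_det_ne σ hfix2 s h0 h1
  by_cases hδ : (bfM c d s (σ s)).det = 0
  · refine ⟨{(0, 0)}, by simp, ?_⟩
    intro x y h
    obtain ⟨rfl, rfl⟩ := bf_rad_degenerate σ hdet hcd hδ h
    simp
  · have hδ' : σ (bfM c d s (σ s)).det ≠ 0 := by simpa using hδ
    set δ := σ (bfM c d s (σ s)).det
    set G := bfM (σ c) (σ d) (σ s) (σ (σ s)) * bfM c d s (σ s) with hG
    obtain ⟨S, hS, hS'⟩ := bf_lin_card σ hfix2 (G 0 0 / δ) (G 0 1 / δ) (G 1 0 / δ) (G 1 1 / δ)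
    refine ⟨S, hS, fun x y h => hS' x y ?_ ?_⟩
    · have := congrFun (bf_rad_step σ h) 0
      rw [Matrix.mulVec_mulVec, ← hG] at this
      simp [Matrix.mulVec, dotProduct, Fin.sum_univ_two] at this
      field_simp
      linear_combination -this
    · have := congrFun (bf_rad_step σ h) 1
      rw [Matrix.mulVec_mulVec, ← hG] at this
      simp [Matrix.mulVec, dotProduct, Fin.sum_univ_two] at this
      field_simp
      linear_combination -this

lemma bf_rad_map {s c d x y : F} (h : bfRad σ s c d x y) :
    bfRad σ (σ s) (σ c) (σ d) (σ x) (σ y) := by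
  obtain ⟨h1, h2⟩ := h
  have e1 := congrArg σ h1
  have e2 := congrArg σ h2
  simp only [map_add, map_mul, map_one] at e1 e2
  constructor
  · simpa using e1
  · simpa using e2

def bfPhi (M : ℕ → Matrix (Fin 2) (Fin 2) F) : ℕ → Matrix (Fin 2) (Fin 2) F
  | 0 => 1
  | n + 1 => M n * bfPhi M n

lemma bfPhi_add (M : ℕ → Matrix (Fin 2) (Fin 2) F) {k : ℕ} (hM : ∀ j, M (k + j) = M j) (n : ℕ) :
    bfPhi M (k + n) = bfPhi M n * bfPhi M k := by
  induction n with
  | zero => simp [bfPhi]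
  | succ n ih =>
    rw [← Nat.add_assoc, bfPhi, ih, bfPhi, hM, Matrix.mul_assoc]

lemma bfPhi_det (M : ℕ → Matrix (Fin 2) (Fin 2) F) (n : ℕ) :
    (bfPhi M n).det = ∏ j ∈ Finset.range n, (M j).det := by
  induction n with
  | zero => simp [bfPhi]
  | succ n ih => rw [bfPhi, Matrix.det_mul, ih, Finset.prod_range_succ, mul_comm]

/-- the `j`-th conjugate of the matrix of the component `(c,1)` -/
def bfMj (s c : F) (j : ℕ) : Matrix (Fin 2) (Fin 2) F :=
  bfM (σ^[j] c) 1 (σ^[j] s) (σ^[j + 1] s)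

lemma bfMj_det (s c : F) (j : ℕ) : (bfMj σ s c j).det = σ^[j] (bfMj σ s c 0).det := by
  induction j with
  | zero => rfl
  | succ j ih =>
    rw [Function.iterate_succ_apply', ← ih]
    simp [bfMj, bfM, bfC, bfD, Matrix.det_fin_two, Function.iterate_succ_apply',
      -Function.iterate_succ]

lemma bf_norm_one (τ : F →+* F) (hfixτ : ∀ x, τ x = x → x = 0 ∨ x = 1) {k : ℕ}
    (hk : ∀ x, τ^[k] x = x) (z : F) (hz : z ≠ 0) :
    ∏ j ∈ Finset.range k, τ^[j] z = 1 := by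
  have hne : ∏ j ∈ Finset.range k, τ^[j] z ≠ 0 := by
    rw [Finset.prod_ne_zero_iff]
    intro j _
    induction j with
    | zero => simpa using hz
    | succ j ih => rw [Function.iterate_succ_apply']; simpa using ih (by grind)
  have hfx : τ (∏ j ∈ Finset.range k, τ^[j] z) = ∏ j ∈ Finset.range k, τ^[j] z := by
    rw [map_prod]
    simp_rw [← Function.iterate_succ_apply']
    apply mul_right_cancel₀ hz
    have h1 := Finset.prod_range_succ (fun j => τ^[j] z) k
    have h2 := Finset.prod_range_succ' (fun j => τ^[j] z) k
    rw [hk] at h1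
    rw [← h1, h2]
    simp
  rcases hfixτ _ hfx with h | h
  · exact absurd h hne
  · exact h

lemma bf_step_iter {s c x y : F} (h : bfRad σ s c 1 x y) (m : ℕ) :
    bfPhi (bfMj σ s c) (2 * m) *ᵥ ![x, y] =
      (∏ j ∈ Finset.range m, (σ.comp σ)^[j] (σ (bfMj σ s c 0).det)) •
        ![σ^[2 * m] x, σ^[2 * m] y] := by
  have hrad : ∀ j, bfRad σ (σ^[j] s) (σ^[j] c) 1 (σ^[j] x) (σ^[j] y) := by
    intro j
    induction j with
    | zero => simpa using h
    | succ j ih =>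
      have := bf_rad_map σ ih
      simpa only [Function.iterate_succ_apply', map_one] using this
  induction m with
  | zero => simp [bfPhi]
  | succ m ih =>
    have e : 2 * (m + 1) = 2 * m + 1 + 1 := by ring
    rw [e, bfPhi, bfPhi, ← Matrix.mulVec_mulVec, ← Matrix.mulVec_mulVec, ih, Matrix.mulVec_smul,
      Matrix.mulVec_smul]
    have := bf_rad_step σ (hrad (2 * m))
    have e1 : bfMj σ s c (2 * m) = bfM (σ^[2 * m] c) 1 (σ^[2 * m] s) (σ (σ^[2 * m] s)) := by
      rw [bfMj, Function.iterate_succ_apply']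
    have e2 : bfMj σ s c (2 * m + 1) = bfM (σ (σ^[2 * m] c)) (σ 1) (σ (σ^[2 * m] s))
        (σ (σ (σ^[2 * m] s))) := by
      rw [bfMj, map_one]
      simp only [Function.iterate_succ_apply']
    have e3 : σ (bfM (σ^[2 * m] c) 1 (σ^[2 * m] s) (σ (σ^[2 * m] s))).det =
        (σ.comp σ)^[m] (σ (bfMj σ s c 0).det) := by
      rw [← e1, bfMj_det, RingHom.coe_comp, show (⇑σ ∘ ⇑σ) = (⇑σ)^[2] from rfl,
        ← Function.iterate_mul, ← Function.iterate_succ_apply' σ, ← Function.iterate_succ_apply σ]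
    rw [e1, e2, this, smul_smul, Finset.prod_range_succ, e3]
    simp only [Function.iterate_succ_apply']

/-- if the radical of the component `(c,1)` is nontrivial, the cyclic trace vanishes -/
lemma bf_trace_zero {k : ℕ} (hk : Odd k) (hσ : ∀ x, σ^[k] x = x)
    (hfix : ∀ x, σ x = x → x = 0 ∨ x = 1) {s c x y : F} (h0 : s ≠ 0) (h1 : s ≠ 1)
    (hxy : ¬ (x = 0 ∧ y = 0)) (h : bfRad σ s c 1 x y) :
    (bfPhi (bfMj σ s c) k).trace = 0 := by
  have hfix2 := bf_fix2 σ hk hσ hfix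
  have h22 : (2 : F) = 0 := CharTwo.two_eq_zero
  have hδ : (bfMj σ s c 0).det ≠ 0 := by
    intro hδ
    exact hxy (bf_rad_degenerate σ (bf_det_ne σ hfix2 s h0 h1) (by simp) hδ h)
  have hdet : (bfPhi (bfMj σ s c) k).det = 1 := by
    rw [bfPhi_det, Finset.prod_congr rfl (fun j _ => bfMj_det σ s c j)]
    exact bf_norm_one σ hfix hσ _ hδ
  have hstep := bf_step_iter σ h k
  rw [bf_norm_one (σ.comp σ) (fun x hx => hfix2 x hx) (fun x => by
      rw [RingHom.coe_comp, show (⇑σ ∘ ⇑σ) = (⇑σ)^[2] from rfl, ← Function.iterate_mul, mul_comm,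
        Function.iterate_mul]
      exact Function.iterate_fixed (hσ x) 2) _ ((map_ne_zero σ).2 hδ)] at hstep
  have hper : ∀ j, bfMj σ s c (k + j) = bfMj σ s c j := by
    intro j
    simp only [bfMj]
    rw [Function.iterate_add_apply, hσ, Function.iterate_add_apply, hσ, Nat.add_assoc,
      Function.iterate_add_apply _ k, hσ]
  have hfx : ∀ z, σ^[2 * k] z = z := by
    intro z
    rw [mul_comm, Function.iterate_mul]
    exact Function.iterate_fixed (hσ z) 2
  rw [hfx, hfx, two_mul, bfPhi_add _ hper] at hstep
  generalize bfPhi (bfMj σ s c) k = P at *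
  have f1 := congrFun hstep 0
  have f2 := congrFun hstep 1
  simp [Matrix.mulVec, dotProduct, Fin.sum_univ_two, Matrix.mul_apply] at f1 f2
  rw [Matrix.det_fin_two] at hdet
  rw [Matrix.trace_fin_two]
  by_contra htr
  have g1 : P 0 0 * x + P 0 1 * y = 0 := by
    apply mul_left_cancel₀ htr
    grind
  have g2 : P 1 0 * x + P 1 1 * y = 0 := by
    apply mul_left_cancel₀ htr
    grind
  apply hxy
  constructor
  · linear_combination (-x) * hdet + P 1 1 * g1 - P 0 1 * g2
  · linear_combination (-y) * hdet + P 0 0 * g2 - P 1 0 * g1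

end Abstract2
section Abstract3

set_option linter.unusedSimpArgs false
set_option linter.unusedSectionVars false
open scoped Matrix

variable {F : Type*} [Field F] [CharP F 2] (σ : F →+* F)

/-- coefficient matrices of the cyclic product -/
def bfX (s : F) (S : Finset ℕ) : ℕ → Matrix (Fin 2) (Fin 2) F
  | 0 => 1
  | n + 1 => (if n ∈ S then bfC (σ^[n] s) (σ^[n + 1] s) else bfD (σ^[n] s) (σ^[n + 1] s)) *
      bfX s S n

lemma bfX_congr (s : F) {S T : Finset ℕ} (n : ℕ) (h : ∀ j < n, (j ∈ S ↔ j ∈ T)) :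
    bfX σ s S n = bfX σ s T n := by
  induction n with
  | zero => rfl
  | succ n ih =>
    rw [bfX, bfX, ih (fun j hj => h j (by omega))]
    simp only [h n (by omega)]

lemma bfPhi_expand (s c : F) (n : ℕ) :
    bfPhi (bfMj σ s c) n =
      ∑ S ∈ (Finset.range n).powerset, (∏ j ∈ S, σ^[j] c) • bfX σ s S n := by
  induction n with
  | zero => simp [bfPhi, bfX]
  | succ n ih =>
    rw [bfPhi, ih, Finset.range_add_one, Finset.sum_powerset_insert (by simp), Finset.mul_sum,
      ← Finset.sum_add_distrib]
    refine Finset.sum_congr rfl fun S hS => ?_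
    have hn : n ∉ S := fun h => by simpa using Finset.mem_powerset.1 hS h
    rw [bfX, bfX, Finset.prod_insert hn, if_neg hn, if_pos (Finset.mem_insert_self _ _),
      bfX_congr σ s (S := insert n S) (T := S) n (by
        intro j hj
        simp [hj.ne])]
    rw [bfMj, bfM, one_smul]
    simp only [Matrix.add_mul, Matrix.smul_mul, Matrix.mul_smul, smul_add, smul_smul]
    rw [add_comm, mul_comm]

/-- the monomial functions, as monoid homomorphisms -/
def bfMono (S : Finset ℕ) : F →* F where
  toFun c := ∏ j ∈ S, σ^[j] c
  map_one' := by
    apply Finset.prod_eq_one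
    intro j _
    exact iterate_map_one σ j
  map_mul' x y := by
    rw [← Finset.prod_mul_distrib]
    refine Finset.prod_congr rfl fun j _ => ?_
    exact iterate_map_mul σ j x y

lemma bf_all_coeff {k : ℕ} (hinj : ∀ S T : Finset ℕ, S ⊆ Finset.range k → T ⊆ Finset.range k →
      (∀ c : F, ∏ j ∈ S, σ^[j] c = ∏ j ∈ T, σ^[j] c) → S = T)
    (g : Finset ℕ → F)
    (h : ∀ c : F, ∑ S ∈ (Finset.range k).powerset, (∏ j ∈ S, σ^[j] c) * g S = 0) :
    ∀ S ⊆ Finset.range k, g S = 0 := by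
  have hli := linearIndependent_monoidHom F F
  have hi : Function.Injective (fun S : {S // S ∈ (Finset.range k).powerset} =>
      bfMono σ S.1) := by
    intro S T hST
    apply Subtype.ext
    apply hinj _ _ (Finset.mem_powerset.1 S.2) (Finset.mem_powerset.1 T.2)
    intro c
    exact DFunLike.congr_fun hST c
  have hli2 := hli.comp _ hi
  rw [Fintype.linearIndependent_iff] at hli2
  have := hli2 (fun S => g S.1) (by
    ext c
    rw [Finset.sum_apply]
    simp only [Function.comp, Pi.smul_apply, smul_eq_mul, Pi.zero_apply]
    rw [← h c, ← Finset.sum_coe_sort (Finset.range k).powerset]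
    refine Finset.sum_congr rfl fun S _ => ?_
    rw [mul_comm]; rfl)
  intro S hS
  exact this ⟨S, Finset.mem_powerset.2 hS⟩

lemma bf_span (hfix2 : ∀ x, σ (σ x) = x → x = 0 ∨ x = 1) (s : F) (h0 : s ≠ 0) (h1 : s ≠ 1)
    (m : ℕ) (Z : Matrix (Fin 2) (Fin 2) F)
    (hZ : ∀ S ⊆ Finset.range (2 * (m + 1)), (Z * bfX σ s S (2 * (m + 1))).trace = 0) : Z = 0 := by
  have hs0 : ∀ j, σ^[j] s ≠ 0 := by
    intro j
    induction j with
    | zero => simpa using h0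
    | succ j ih => rw [Function.iterate_succ_apply']; simpa using ih
  have hs1 : ∀ j, σ^[j] s ≠ 1 := by
    intro j
    induction j with
    | zero => simpa using h1
    | succ j ih =>
      rw [Function.iterate_succ_apply']
      intro h
      exact ih (σ.injective (by rw [h, map_one]))
  have hdet : ∀ j, (bfQ (σ^[j] s) (σ^[j + 1] s) (σ^[j + 1 + 1] s)).det ≠ 0 := by
    intro j
    rw [Function.iterate_succ_apply' _ (j + 1), Function.iterate_succ_apply']
    exact bf_det_ne σ hfix2 _ (hs0 j) (hs1 j)
  induction m generalizing Z with
  | zero =>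
    have e : 2 * (0 + 1) = 0 + 1 + 1 := rfl
    rw [e] at hZ
    simp only [bfX] at hZ
    apply bf_trace_span (hdet 0)
    · simpa using hZ {0, 1} (by decide)
    · simpa using hZ {1} (by decide)
    · simpa using hZ {0} (by decide)
    · simpa using hZ ∅ (by decide)
  | succ m ih =>
    have e : 2 * (m + 1 + 1) = 2 * (m + 1) + 1 + 1 := by ring
    rw [e] at hZ
    generalize 2 * (m + 1) = n at *
    apply bf_mul_span (hdet n)
    · apply ih
      intro S hS
      have hn : n ∉ S := fun h => by simpa using hS h
      have hn1 : n + 1 ∉ S := fun h => by simpa using hS h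
      have := hZ (insert (n + 1) (insert n S)) (by grind)
      rw [bfX, bfX, bfX_congr σ s (T := S) n (by grind)] at this
      simpa [Matrix.mul_assoc, hn, hn1] using this
    · apply ih
      intro S hS
      have hn : n ∉ S := fun h => by simpa using hS h
      have hn1 : n + 1 ∉ S := fun h => by simpa using hS h
      have := hZ (insert (n + 1) S) (by grind)
      rw [bfX, bfX, bfX_congr σ s (T := S) n (by grind)] at this
      simpa [Matrix.mul_assoc, hn, hn1] using this
    · apply ih
      intro S hS
      have hn : n ∉ S := fun h => by simpa using hS h
      have hn1 : n + 1 ∉ S := fun h => by simpa using hS h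
      have := hZ (insert n S) (by grind)
      rw [bfX, bfX, bfX_congr σ s (T := S) n (by grind)] at this
      simpa [Matrix.mul_assoc, hn, hn1] using this
    · apply ih
      intro S hS
      have hn : n ∉ S := fun h => by simpa using hS h
      have hn1 : n + 1 ∉ S := fun h => by simpa using hS h
      have := hZ S (by grind)
      rw [bfX, bfX] at this
      simpa [Matrix.mul_assoc, hn, hn1] using this

/-- some component `(c,1)` is bent -/
lemma bf_exists_bent {k : ℕ} (hk : Odd k) (hk3 : 3 ≤ k) (hσ : ∀ x, σ^[k] x = x)
    (hfix : ∀ x, σ x = x → x = 0 ∨ x = 1)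
    (hinj : ∀ S T : Finset ℕ, S ⊆ Finset.range k → T ⊆ Finset.range k →
      (∀ c : F, ∏ j ∈ S, σ^[j] c = ∏ j ∈ T, σ^[j] c) → S = T)
    (s : F) (h0 : s ≠ 0) (h1 : s ≠ 1) :
    ∃ c : F, ∀ x y, bfRad σ s c 1 x y → x = 0 ∧ y = 0 := by
  by_contra hcon
  push Not at hcon
  have htr : ∀ c : F, (bfPhi (bfMj σ s c) k).trace = 0 := by
    intro c
    obtain ⟨x, y, h, hxy⟩ := hcon c
    exact bf_trace_zero σ hk hσ hfix h0 h1 (by tauto) h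
  have hX : ∀ S ⊆ Finset.range k, (bfX σ s S k).trace = 0 := by
    apply bf_all_coeff σ hinj
    intro c
    have := htr c
    rw [bfPhi_expand, Matrix.trace_sum] at this
    simpa only [Matrix.trace_smul, smul_eq_mul] using this
  obtain ⟨m, rfl⟩ : ∃ m, k = 2 * (m + 1) + 1 := by
    obtain ⟨m, rfl⟩ := hk
    exact ⟨m - 1, by omega⟩
  generalize hn : 2 * (m + 1) = n at *
  have hC : bfC (σ^[n] s) (σ^[n + 1] s) = 0 := by
    apply bf_span σ (bf_fix2 σ hk hσ hfix) s h0 h1 m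
    rw [hn]
    intro S hS
    have := hX (insert n S) (by grind)
    rw [bfX, bfX_congr σ s (T := S) n (by grind)] at this
    simpa using this
  have := congrFun (congrFun hC 0) 1
  simp [bfC] at this

end Abstract3
section Sums

set_option linter.unusedSimpArgs false
set_option linter.unusedSectionVars false

lemma bf_sum_char {G : Type*} [AddCommGroup G] [Fintype G] (ψ : G → ℤ)
    (hψ : ∀ u v, ψ (u + v) = ψ u * ψ v) {u₀ : G} (h : ψ u₀ ≠ 1) : ∑ u, ψ u = 0 := by
  have h1 : ∑ u, ψ u = (∑ u, ψ u) * ψ u₀ := by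
    rw [Finset.sum_mul, ← Equiv.sum_comp (Equiv.addRight u₀)]
    exact Finset.sum_congr rfl fun u _ => by simp [hψ]
  have h2 : (∑ u, ψ u) * (ψ u₀ - 1) = 0 := by linear_combination -h1
  rcases mul_eq_zero.1 h2 with h3 | h3
  · exact h3
  · exact absurd (by linarith) h

open scoped Classical in
/-- the square of a quadratic character sum -/
lemma bf_gen {G : Type*} [AddCommGroup G] [Fintype G] (f : G → ℤ) (B : G → G → ℤ)
    (hf : ∀ u, f u * f u = 1) (hB : ∀ u v, f (u + v) = f u * f v * B u v)
    (hBadd : ∀ h u v, B h (u + v) = B h u * B h v) :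
    ((∑ u, f u) ^ 2 = Fintype.card G * ((Finset.univ.filter fun h => ∀ u, B h u = 1).card : ℤ) ∧
      ∀ h, (∀ u, B h u = 1) → f h = 1) ∨
    (∑ u, f u = 0 ∧ ∃ h, (∀ u, B h u = 1) ∧ f h ≠ 1) := by
  have hBeq : ∀ u v, B u v = f (u + v) * f u * f v := by
    intro u v
    rw [hB]
    linear_combination (-B u v * f v * f v) * hf u - B u v * hf v
  have hBsymm : ∀ u v, B u v = B v u := by
    intro u v
    rw [hBeq, hBeq, add_comm u v]; ring
  have hBadd' : ∀ h h' u, B (h + h') u = B h u * B h' u := by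
    intro h h' u
    rw [hBsymm, hBadd, hBsymm u h, hBsymm u h']
  have hsq : (∑ u, f u) ^ 2 =
      Fintype.card G * ∑ h ∈ Finset.univ.filter (fun h => ∀ u, B h u = 1), f h := by
    have h1 : (∑ u, f u) ^ 2 = ∑ h, f h * ∑ u, B h u := by
      rw [sq, Finset.sum_mul_sum]
      have : ∀ u, ∑ v, f u * f v = ∑ h, f h * B h u := by
        intro u
        rw [← Equiv.sum_comp (Equiv.addRight u)]
        refine Finset.sum_congr rfl fun h _ => ?_
        rw [Equiv.coe_addRight, hB]
        linear_combination f h * B h u * hf u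
      rw [Finset.sum_congr rfl fun u _ => this u, Finset.sum_comm]
      exact Finset.sum_congr rfl fun h _ => by rw [Finset.mul_sum]
    rw [h1, Finset.sum_filter, Finset.mul_sum]
    refine Finset.sum_congr rfl fun h _ => ?_
    split_ifs with hh
    · simp [hh, mul_comm]
    · push Not at hh
      obtain ⟨u₀, hu⟩ := hh
      rw [bf_sum_char (B h) (hBadd h) hu]; simp
  by_cases hall : ∀ h, (∀ u, B h u = 1) → f h = 1
  · left
    refine ⟨?_, hall⟩
    rw [hsq, Finset.sum_congr rfl (g := fun _ => (1 : ℤ))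
      (fun h hh => hall h (Finset.mem_filter.1 hh).2)]
    simp
  · right
    push Not at hall
    obtain ⟨h₀, hR, hne⟩ := hall
    refine ⟨?_, h₀, hR, hne⟩
    have h1 : ∑ h ∈ Finset.univ.filter (fun h => ∀ u, B h u = 1), f h =
        ∑ h ∈ Finset.univ.filter (fun h => ∀ u, B h u = 1), f h * f h₀ := by
      symm
      apply Finset.sum_equiv (Equiv.addRight h₀)
      · intro h
        simp [hBadd', hR]
      · intro h _
        rw [Equiv.coe_addRight, hB, hBsymm, hR, mul_one]
    rw [← Finset.sum_mul] at h1
    have h2 : (∑ h ∈ Finset.univ.filter (fun h => ∀ u, B h u = 1), f h) * (f h₀ - 1) = 0 := by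
      linear_combination -h1
    rcases mul_eq_zero.1 h2 with h3 | h3
    · rw [h3, mul_zero] at hsq
      exact pow_eq_zero_iff (two_ne_zero) |>.1 hsq
    · exact absurd (by linarith) hne

variable {F : Type*} [Field F] [CharP F 2] [Fintype F] (σ : F →+* F) (χ : F → ℤ)

/-- a component function, with values `±1` -/
def bfF (s a b c d : F) (u : F × F) : ℤ :=
  χ (c * ((s * u.1 + u.2) * σ (s * u.1 + u.2) + u.1 * σ u.1) +
    d * ((u.1 + s * u.2) * σ (u.1 + s * u.2) + u.2 * σ u.2) + a * u.1 + b * u.2)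

/-- its polarization -/
def bfB (s c d : F) (u v : F × F) : ℤ :=
  χ (σ v.1 * (σ (c * (s * σ s + 1) + d) * σ (σ u.1) + σ (c * s + d * σ s) * σ (σ u.2)
      + ((c * (s * σ s + 1) + d) * u.1 + (c * σ s + d * s) * u.2)) +
    σ v.2 * (σ (c * σ s + d * s) * σ (σ u.1) + σ (c + d * (s * σ s + 1)) * σ (σ u.2)
      + ((c * s + d * σ s) * u.1 + (c + d * (s * σ s + 1)) * u.2)))

variable (hadd : ∀ x y, χ (x + y) = χ x * χ y) (hpm : ∀ x, χ x = 1 ∨ χ x = -1)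
  (hχσ : ∀ x, χ (σ x) = χ x) (hχ1 : χ 1 = -1)

lemma bf_chi_zero (hadd : ∀ x y, χ (x + y) = χ x * χ y) (hpm : ∀ x, χ x = 1 ∨ χ x = -1) :
    χ 0 = 1 := by
  have := hadd 0 0
  rw [add_zero] at this
  rcases hpm 0 with h | h
  · exact h
  · rw [h] at this; norm_num at this

lemma bfF_polar (hadd : ∀ x y, χ (x + y) = χ x * χ y)
    (hχσ : ∀ x, χ (σ x) = χ x) (s a b c d : F) (u v : F × F) :
    bfF σ χ s a b c d (u + v) = bfF σ χ s a b c d u * bfF σ χ s a b c d v * bfB σ χ s c d u v := by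
  have h22 : (2 : F) = 0 := CharTwo.two_eq_zero
  obtain ⟨x, y⟩ := u
  obtain ⟨z, w⟩ := v
  have e : bfB σ χ s c d (x, y) (z, w) =
      χ (σ x * ((c * (s * σ s + 1) + d) * z + (c * σ s + d * s) * w) +
        σ y * ((c * s + d * σ s) * z + (c + d * (s * σ s + 1)) * w)) *
      χ (σ z * ((c * (s * σ s + 1) + d) * x + (c * σ s + d * s) * y) +
        σ w * ((c * s + d * σ s) * x + (c + d * (s * σ s + 1)) * y)) := by
    rw [← hχσ (σ x * _ + _), ← hadd]
    simp only [bfB]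
    congr 1
    simp only [map_add, map_mul, map_one]
    ring
  rw [e]
  simp only [bfF, ← hadd, Prod.mk_add_mk]
  congr 1
  simp only [map_add, map_mul, map_one]
  ring

lemma bfB_add (hadd : ∀ x y, χ (x + y) = χ x * χ y) (s c d : F) (h u v : F × F) :
    bfB σ χ s c d h (u + v) = bfB σ χ s c d h u * bfB σ χ s c d h v := by
  simp only [bfB, ← hadd, Prod.fst_add, Prod.snd_add, map_add]
  congr 1
  ring

lemma bfB_rad (hadd : ∀ x y, χ (x + y) = χ x * χ y) (hpm : ∀ x, χ x = 1 ∨ χ x = -1)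
    (hχ1 : χ 1 = -1) (s c d x y : F) :
    (∀ v, bfB σ χ s c d (x, y) v = 1) ↔ bfRad σ s c d x y := by
  have hsurj : Function.Surjective σ := Finite.surjective_of_injective σ.injective
  have key : ∀ L : F, (∀ v, χ (σ v * L) = 1) → L = 0 := by
    intro L h
    by_contra hL
    obtain ⟨v, hv⟩ := hsurj L⁻¹
    have := h v
    rw [hv, inv_mul_cancel₀ hL, hχ1] at this
    norm_num at this
  constructor
  · intro h
    constructor
    · apply bf_eq_of_add
      apply key
      intro v
      have := h (v, 0)
      simpa [bfB] using this
    · apply bf_eq_of_add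
      apply key
      intro v
      have := h (0, v)
      simpa [bfB] using this
  · rintro ⟨h1, h2⟩ v
    simp only [bfB]
    rw [h1, h2, bf_add_self, bf_add_self, mul_zero, mul_zero, add_zero, bf_chi_zero χ hadd hpm]

open scoped Classical in
/-- dichotomy for the Walsh coefficients -/
lemma bf_walsh (hadd : ∀ x y, χ (x + y) = χ x * χ y) (hpm : ∀ x, χ x = 1 ∨ χ x = -1)
    (hχσ : ∀ x, χ (σ x) = χ x) (hχ1 : χ 1 = -1) (s a b c d : F) :
    ((∑ u, bfF σ χ s a b c d u) ^ 2 = (Fintype.card F : ℤ) ^ 2 *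
        ((Finset.univ.filter fun u : F × F => bfRad σ s c d u.1 u.2).card : ℤ) ∧
      ∀ x y, bfRad σ s c d x y → bfF σ χ s a b c d (x, y) = 1) ∨
    (∑ u, bfF σ χ s a b c d u = 0 ∧
      ∃ x y, bfRad σ s c d x y ∧ bfF σ χ s a b c d (x, y) ≠ 1) := by
  have hff : ∀ u, bfF σ χ s a b c d u * bfF σ χ s a b c d u = 1 := by
    intro u
    rcases hpm (c * ((s * u.1 + u.2) * σ (s * u.1 + u.2) + u.1 * σ u.1) +
      d * ((u.1 + s * u.2) * σ (u.1 + s * u.2) + u.2 * σ u.2) + a * u.1 + b * u.2) with h | h <;>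
    rw [bfF, h] <;> norm_num
  have := bf_gen (bfF σ χ s a b c d) (bfB σ χ s c d) hff (bfF_polar σ χ hadd hχσ s a b c d)
    (bfB_add σ χ hadd s c d)
  have e : ∀ u : F × F, (∀ v, bfB σ χ s c d u v = 1) ↔ bfRad σ s c d u.1 u.2 :=
    fun u => bfB_rad σ χ hadd hpm hχ1 s c d u.1 u.2
  simp only [e, Fintype.card_prod, Prod.forall, Prod.exists] at this
  rw [sq (Fintype.card F : ℤ)]
  exact_mod_cast this

open scoped Classical in
lemma bf_walsh_value (hadd : ∀ x y, χ (x + y) = χ x * χ y) (hpm : ∀ x, χ x = 1 ∨ χ x = -1)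
    (hχσ : ∀ x, χ (σ x) = χ x) (hχ1 : χ 1 = -1)
    (hfix2 : ∀ x, σ (σ x) = x → x = 0 ∨ x = 1) (s a b c d : F)
    (h0 : s ≠ 0) (h1 : s ≠ 1) (hcd : ¬ (c = 0 ∧ d = 0)) :
    |∑ u, bfF σ χ s a b c d u| = 0 ∨ |∑ u, bfF σ χ s a b c d u| = Fintype.card F ∨
      |∑ u, bfF σ χ s a b c d u| = 2 * Fintype.card F := by
  rcases bf_walsh σ χ hadd hpm hχσ hχ1 s a b c d with ⟨hW, -⟩ | ⟨hW, -⟩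
  · right
    obtain ⟨S, hS, hS'⟩ := bf_rad_card σ hfix2 s c d h0 h1 hcd
    have hle : (Finset.univ.filter fun u : F × F => bfRad σ s c d u.1 u.2).card ≤ 4 := by
      refine (Finset.card_le_card ?_).trans hS
      intro u hu
      exact hS' u.1 u.2 (Finset.mem_filter.1 hu).2
    have hpos : 0 < (Finset.univ.filter fun u : F × F => bfRad σ s c d u.1 u.2).card := by
      apply Finset.card_pos.2
      exact ⟨(0, 0), by simp [bfRad]⟩
    generalize (Finset.univ.filter fun u : F × F => bfRad σ s c d u.1 u.2).card = r at *
    generalize ∑ u, bfF σ χ s a b c d u = W at *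
    have hq : (0 : ℤ) < Fintype.card F := by exact_mod_cast Fintype.card_pos
    generalize (Fintype.card F : ℤ) = q at *
    obtain ⟨m, rfl⟩ : q ∣ W := by
      rw [← Int.pow_dvd_pow_iff (n := 2) (by norm_num), hW]
      exact dvd_mul_right _ _
    have hm : m ^ 2 = r := by
      apply mul_left_cancel₀ (pow_ne_zero 2 hq.ne')
      rw [← hW]; ring
    rw [abs_mul, abs_of_pos hq]
    have hm2 : |m| ^ 2 = r := by rw [sq_abs, hm]
    have hmn : 0 ≤ |m| := abs_nonneg m
    have hml : |m| ≤ 2 := by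
      have : (r : ℤ) ≤ 4 := by exact_mod_cast hle
      nlinarith
    generalize |m| = n at *
    have : (0 : ℤ) < r := by exact_mod_cast hpos
    interval_cases n
    · omega
    · left; ring
    · right; ring
  · left; rw [hW]; rfl

end Sums
section Values

variable {F : Type*} [Field F] [CharP F 2] [Fintype F] (σ : F →+* F) (χ : F → ℤ)

lemma bf_abs_eq {W q : ℤ} {n : ℤ} (hq : 0 ≤ q) (hn : 0 ≤ n) (h : W ^ 2 = q ^ 2 * n ^ 2) :
    |W| = n * q := by
  have : W ^ 2 = (n * q) ^ 2 := by rw [h]; ring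
  rw [sq_eq_sq_iff_abs_eq_abs, abs_of_nonneg (mul_nonneg hn hq)] at this
  exact this

lemma bf_value_zero (hadd : ∀ x y, χ (x + y) = χ x * χ y) (hpm : ∀ x, χ x = 1 ∨ χ x = -1)
    (hχσ : ∀ x, χ (σ x) = χ x) (hχ1 : χ 1 = -1) (s : F) :
    ∑ u, bfF σ χ s 0 0 1 0 u = 0 := by
  rcases bf_walsh σ χ hadd hpm hχσ hχ1 s 0 0 1 0 with ⟨-, h⟩ | ⟨h, -⟩
  · have := h 0 1 (by simp [bfRad])
    simp [bfF, hχ1] at this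
  · exact h

lemma bf_value_bent (hadd : ∀ x y, χ (x + y) = χ x * χ y) (hpm : ∀ x, χ x = 1 ∨ χ x = -1)
    (hχσ : ∀ x, χ (σ x) = χ x) (hχ1 : χ 1 = -1) (s c : F)
    (hc : ∀ x y, bfRad σ s c 1 x y → x = 0 ∧ y = 0) :
    |∑ u, bfF σ χ s 0 0 c 1 u| = Fintype.card F := by
  classical
  rcases bf_walsh σ χ hadd hpm hχσ hχ1 s 0 0 c 1 with ⟨h, -⟩ | ⟨-, x, y, h, h'⟩
  · have : (Finset.univ.filter fun u : F × F => bfRad σ s c 1 u.1 u.2) = {(0, 0)} := by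
      ext ⟨x, y⟩
      simp only [Finset.mem_filter, Finset.mem_univ, true_and, Finset.mem_singleton,
        Prod.mk.injEq]
      constructor
      · exact hc x y
      · rintro ⟨rfl, rfl⟩; simp [bfRad]
    rw [this] at h
    have := bf_abs_eq (n := 1) (Int.natCast_nonneg (Fintype.card F)) (by norm_num)
      (by rw [h]; simp)
    rw [this, one_mul]
  · obtain ⟨rfl, rfl⟩ := hc x y h
    exact absurd (by simp [bfF, bf_chi_zero χ hadd hpm]) h'

lemma bf_value_max (hadd : ∀ x y, χ (x + y) = χ x * χ y) (hpm : ∀ x, χ x = 1 ∨ χ x = -1)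
    (hχσ : ∀ x, χ (σ x) = χ x) (hχ1 : χ 1 = -1)
    (hfix2 : ∀ x, σ (σ x) = x → x = 0 ∨ x = 1) (s : F) (h0 : s ≠ 0) (h1 : s ≠ 1) :
    |∑ u, bfF σ χ s (1 + s) 1 1 0 u| = 2 * Fintype.card F := by
  classical
  have h22 : (2 : F) = 0 := CharTwo.two_eq_zero
  obtain ⟨S, hS, hS'⟩ := bf_rad_card σ hfix2 s 1 0 h0 h1 (by simp)
  set T : Finset (F × F) := {(0, 0), (0, 1), (1, s), (1, s + 1)} with hT
  have hTc : T.card = 4 := by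
    rw [hT]
    rw [Finset.card_insert_of_notMem, Finset.card_insert_of_notMem, Finset.card_insert_of_notMem,
      Finset.card_singleton] <;> simp
  set R := (Finset.univ.filter fun u : F × F => bfRad σ s 1 0 u.1 u.2) with hR
  have hTR : T ⊆ R := by
    intro u hu
    simp only [hT, Finset.mem_insert, Finset.mem_singleton] at hu
    rw [hR, Finset.mem_filter]
    refine ⟨Finset.mem_univ _, ?_⟩
    rcases hu with rfl | rfl | rfl | rfl <;> constructor <;>
      simp only [map_add, map_mul, map_one, map_zero] <;> grind
  have hRS : R ⊆ S := by
    intro u hu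
    exact hS' u.1 u.2 (Finset.mem_filter.1 hu).2
  have hTReq : T = R := Finset.eq_of_subset_of_card_le hTR (by
    rw [hTc]; exact (Finset.card_le_card hRS).trans hS)
  have hχ0 := bf_chi_zero χ hadd hpm
  rcases bf_walsh σ χ hadd hpm hχσ hχ1 s (1 + s) 1 1 0 with ⟨h, -⟩ | ⟨-, x, y, h, h'⟩
  · have hc : (Finset.univ.filter fun u : F × F => bfRad σ s 1 0 u.1 u.2).card = 4 := by
      rw [← hTc, hTReq]
    rw [hc] at h
    exact bf_abs_eq (n := 2) (Int.natCast_nonneg (Fintype.card F)) (by norm_num)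
      (by rw [h]; norm_num)
  · exfalso
    apply h'
    have hm : (x, y) ∈ T := by
      rw [hTReq, hR]
      simpa using h
    simp only [hT, Finset.mem_insert, Finset.mem_singleton, Prod.mk.injEq] at hm
    rw [← hχ0, bfF]
    congr 1
    rcases hm with ⟨rfl, rfl⟩ | ⟨rfl, rfl⟩ | ⟨rfl, rfl⟩ | ⟨rfl, rfl⟩ <;>
      simp only [map_add, map_mul, map_one, map_zero] <;> grind

end Values

section Concrete

variable {k : ℕ}

lemma bf_card (hk : k ≠ 0) : Fintype.card (GaloisField 2 k) = 2 ^ k := by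
  rw [← Nat.card_eq_fintype_card, GaloisField.card 2 k hk]

lemma bf_frob (hk : k ≠ 0) (x : GaloisField 2 k) : x ^ 2 ^ k = x := by
  have := FiniteField.pow_card x
  rwa [bf_card hk] at this

lemma bf_tr_add (x y : GaloisField 2 k) : absTrace k (x + y) = absTrace k x + absTrace k y := by
  simp only [absTrace, add_pow_char_pow, Finset.sum_add_distrib]

lemma bf_tr_sq (hk : k ≠ 0) (x : GaloisField 2 k) : absTrace k (x ^ 2) = absTrace k x := by
  have h1 := Finset.sum_range_succ (fun j => x ^ 2 ^ j) k
  have h2 := Finset.sum_range_succ' (fun j => x ^ 2 ^ j) k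
  rw [h1, bf_frob hk] at h2
  simp only [pow_zero, pow_one] at h2
  have h3 := add_right_cancel h2
  rw [absTrace, absTrace, h3]
  refine Finset.sum_congr rfl fun j _ => ?_
  rw [← pow_mul, pow_succ']

lemma bf_tr_sq' (hk : k ≠ 0) (x : GaloisField 2 k) : absTrace k (x ^ 2) = absTrace k x ^ 2 := by
  simp only [absTrace]
  rw [sum_pow_char]
  refine Finset.sum_congr rfl fun j _ => ?_
  rw [← pow_mul, ← pow_mul, mul_comm]

lemma bf_tr_bool (hk : k ≠ 0) (x : GaloisField 2 k) : absTrace k x = 0 ∨ absTrace k x = 1 := by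
  have h := bf_tr_sq' hk x
  rw [bf_tr_sq hk] at h
  have : absTrace k x * (absTrace k x - 1) = 0 := by linear_combination -h
  rcases mul_eq_zero.1 this with h | h
  · exact Or.inl h
  · exact Or.inr (by linear_combination h)

lemma bf_tr_one (hk : Odd k) : absTrace k (1 : GaloisField 2 k) = 1 := by
  have h22 : (2 : GaloisField 2 k) = 0 := CharTwo.two_eq_zero
  obtain ⟨m, rfl⟩ := hk
  simp [absTrace, h22]

open scoped Classical in
noncomputable def bfChi (k : ℕ) (x : GaloisField 2 k) : ℤ := if absTrace k x = 0 then 1 else -1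

lemma bfChi_add (hk : k ≠ 0) (x y : GaloisField 2 k) :
    bfChi k (x + y) = bfChi k x * bfChi k y := by
  have e := bf_tr_add x y
  rcases bf_tr_bool hk x with h | h <;> rcases bf_tr_bool hk y with h' | h' <;>
    rw [h, h'] at e
  · rw [add_zero] at e
    simp [bfChi, h, h', e]
  · rw [zero_add] at e
    simp [bfChi, h, h', e]
  · rw [add_zero] at e
    simp [bfChi, h, h', e]
  · rw [bf_add_self] at e
    simp [bfChi, h, h', e]

lemma bfChi_pm (x : GaloisField 2 k) : bfChi k x = 1 ∨ bfChi k x = -1 := by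
  simp only [bfChi]; split_ifs <;> simp

lemma bfChi_pow (hk : k ≠ 0) (n : ℕ) (x : GaloisField 2 k) :
    bfChi k (x ^ 2 ^ n) = bfChi k x := by
  induction n with
  | zero => simp
  | succ n ih => rw [pow_succ, pow_mul, bfChi, bf_tr_sq hk, ← bfChi, ih]

lemma bfChi_one (hk : Odd k) : bfChi k 1 = -1 := by
  simp [bfChi, bf_tr_one hk]

lemma bf_walsh_eq (hk : k ≠ 0) (i t : ℕ) (s a b c d : GaloisField 2 k) :
    butterflyWalsh k ((2 ^ i + 1) * 2 ^ t) s a b (c ^ 2 ^ t) (d ^ 2 ^ t) =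
      ∑ u, bfF (iterateFrobenius (GaloisField 2 k) 2 i) (bfChi k) s a b c d u := by
  rw [butterflyWalsh, Fintype.sum_prod_type]
  refine Finset.sum_congr rfl fun x _ => Finset.sum_congr rfl fun y _ => ?_
  have hz : ∀ z : GaloisField 2 k, z ^ ((2 ^ i + 1) * 2 ^ t) =
      (z * iterateFrobenius (GaloisField 2 k) 2 i z) ^ 2 ^ t := by
    intro z
    rw [pow_mul, pow_succ', iterateFrobenius_def]
  have e : c ^ 2 ^ t * ((s * x + y) ^ ((2 ^ i + 1) * 2 ^ t) + x ^ ((2 ^ i + 1) * 2 ^ t)) +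
      d ^ 2 ^ t * ((x + s * y) ^ ((2 ^ i + 1) * 2 ^ t) + y ^ ((2 ^ i + 1) * 2 ^ t)) =
      (c * ((s * x + y) * iterateFrobenius (GaloisField 2 k) 2 i (s * x + y) +
          x * iterateFrobenius (GaloisField 2 k) 2 i x) +
        d * ((x + s * y) * iterateFrobenius (GaloisField 2 k) 2 i (x + s * y) +
          y * iterateFrobenius (GaloisField 2 k) 2 i y)) ^ 2 ^ t := by
    simp only [hz, add_pow_char_pow, mul_pow]
  rw [e]
  have h1 : ∀ A B C : GaloisField 2 k, bfChi k (A ^ 2 ^ t + B + C) = bfChi k (A + B + C) := by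
    intro A B C
    rw [bfChi_add hk, bfChi_add hk, bfChi_pow hk, ← bfChi_add hk, ← bfChi_add hk]
  exact h1 _ _ _

lemma bf_iter (i j : ℕ) (x : GaloisField 2 k) :
    (iterateFrobenius (GaloisField 2 k) 2 i)^[j] x = x ^ 2 ^ (i * j) := by
  induction j with
  | zero => simp
  | succ j ih =>
    rw [Function.iterate_succ_apply', ih, iterateFrobenius_def, ← pow_mul, ← pow_add, mul_add,
      mul_one]

lemma bf_frob_mul (hk : k ≠ 0) (n : ℕ) (x : GaloisField 2 k) : x ^ 2 ^ (k * n) = x := by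
  induction n with
  | zero => simp
  | succ n ih => rw [mul_add, mul_one, pow_add, pow_mul, ih, bf_frob hk]

lemma bf_frob_mod (hk : k ≠ 0) (n : ℕ) (x : GaloisField 2 k) : x ^ 2 ^ n = x ^ 2 ^ (n % k) := by
  conv_lhs => rw [← Nat.div_add_mod n k, pow_add, pow_mul, bf_frob_mul hk]

lemma bf_fixed (hk : k ≠ 0) {i : ℕ} (hgcd : Nat.gcd i k = 1) (x : GaloisField 2 k)
    (hx : iterateFrobenius (GaloisField 2 k) 2 i x = x) : x = 0 ∨ x = 1 := by
  have h1 : Function.IsPeriodicPt (frobenius (GaloisField 2 k) 2) i x := by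
    rw [Function.IsPeriodicPt, Function.IsFixedPt, ← coe_iterateFrobenius]; exact hx
  have h2 : Function.IsPeriodicPt (frobenius (GaloisField 2 k) 2) k x := by
    rw [Function.IsPeriodicPt, Function.IsFixedPt, ← coe_iterateFrobenius, iterateFrobenius_def]
    exact bf_frob hk x
  have h3 := h1.gcd h2
  rw [hgcd] at h3
  have h4 : x ^ 2 = x := by
    have : frobenius (GaloisField 2 k) 2 x = x := h3
    rwa [frobenius_def] at this
  have : x * (x - 1) = 0 := by linear_combination h4
  rcases mul_eq_zero.1 this with h | h
  · exact Or.inl h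
  · exact Or.inr (by linear_combination h)

lemma bf_mono_inj (hk : k ≠ 0) {i : ℕ} (hgcd : Nat.gcd i k = 1) (S T : Finset ℕ)
    (hS : S ⊆ Finset.range k) (hT : T ⊆ Finset.range k)
    (h : ∀ c : GaloisField 2 k, ∏ j ∈ S, (iterateFrobenius (GaloisField 2 k) 2 i)^[j] c =
      ∏ j ∈ T, (iterateFrobenius (GaloisField 2 k) 2 i)^[j] c) : S = T := by
  have hmod : ∀ a ∈ Finset.range k, ∀ b ∈ Finset.range k, i * a % k = i * b % k → a = b := by
    intro a ha b hb hab
    rw [Finset.mem_range] at ha hb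
    have h1 : i * a ≡ i * b [MOD k] := hab
    have h2 : a ≡ b [MOD k] := Nat.ModEq.cancel_left_of_coprime (by rwa [Nat.gcd_comm]) h1
    exact Nat.ModEq.eq_of_lt_of_lt h2 ha hb
  have hprod : ∀ U ⊆ Finset.range k, ∀ c : GaloisField 2 k,
      ∏ j ∈ U, (iterateFrobenius (GaloisField 2 k) 2 i)^[j] c =
        c ^ (∑ n ∈ U.image (fun j => i * j % k), 2 ^ n) := by
    intro U hU c
    rw [Finset.sum_image (fun a ha b hb => hmod a (hU ha) b (hU hb)), ← Finset.prod_pow_eq_pow_sum]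
    refine Finset.prod_congr rfl fun j _ => ?_
    rw [bf_iter, bf_frob_mod hk]
  have hlt : ∀ U : Finset ℕ, ∑ n ∈ U.image (fun j => i * j % k), 2 ^ n < 2 ^ k := by
    intro U
    apply Nat.geomSum_lt le_rfl
    intro n hn
    obtain ⟨j, -, rfl⟩ := Finset.mem_image.1 hn
    exact Nat.mod_lt _ (Nat.pos_of_ne_zero hk)
  have hE : ∑ n ∈ S.image (fun j => i * j % k), 2 ^ n =
      ∑ n ∈ T.image (fun j => i * j % k), 2 ^ n := by
    have hpoly := Polynomial.eq_of_natDegree_lt_card_of_eval_eq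
      (Polynomial.X ^ (∑ n ∈ S.image (fun j => i * j % k), 2 ^ n) :
        Polynomial (GaloisField 2 k))
      (Polynomial.X ^ (∑ n ∈ T.image (fun j => i * j % k), 2 ^ n))
      (f := (id : GaloisField 2 k → GaloisField 2 k)) Function.injective_id (by
        intro c
        have := h c
        rw [hprod S hS, hprod T hT] at this
        simpa using this) (by
        rw [Polynomial.natDegree_X_pow, Polynomial.natDegree_X_pow, bf_card hk]
        exact max_lt (hlt S) (hlt T))
    have := congrArg Polynomial.natDegree hpoly
    rwa [Polynomial.natDegree_X_pow, Polynomial.natDegree_X_pow] at this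
  have himg := Finset.geomSum_injective (n := 2) le_rfl hE
  have hinj : Set.InjOn (fun j => i * j % k) (Finset.range k : Set ℕ) :=
    fun a ha b hb => hmod a (by simpa using ha) b (by simpa using hb)
  ext j
  constructor
  · intro hj
    have : i * j % k ∈ T.image (fun j => i * j % k) := by
      rw [← himg]; exact Finset.mem_image_of_mem _ hj
    obtain ⟨j', hj', e⟩ := Finset.mem_image.1 this
    rwa [← hmod j' (hT hj') j (hS hj) e]
  · intro hj
    have : i * j % k ∈ S.image (fun j => i * j % k) := by
      rw [himg]; exact Finset.mem_image_of_mem _ hj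
    obtain ⟨j', hj', e⟩ := Finset.mem_image.1 this
    rwa [← hmod j' (hS hj') j (hT hj) e]

end Concrete

/-- Theorem 3.7 (Walsh spectrum): for `k ≥ 3` odd, `gcd(i,k) = 1`, exponent
`e = (2^i+1)·2^t` and coefficient `α ≠ 0, 1`, the set of absolute values of the Walsh
transform of the closed butterfly over `(c,d) ≠ (0,0)` is exactly `{0, 2^k, 2^(k+1)}`. -/
theorem closedButterfly_walsh_spectrum (k i t : ℕ) (hk : Odd k) (hk3 : 3 ≤ k)
    (hipos : 0 < i) (hgcd : Nat.gcd i k = 1) (ht : t ≤ k - 1)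
    (α : GaloisField 2 k) (hα0 : α ≠ 0) (hα1 : α ≠ 1) :
    {m : ℤ | ∃ a b c d : GaloisField 2 k, (c, d) ≠ (0, 0) ∧
        m = |butterflyWalsh k ((2 ^ i + 1) * 2 ^ t) α a b c d|}
      = {0, 2 ^ k, 2 ^ (k + 1)} := by
  have hk0 : k ≠ 0 := by omega
  set σ := iterateFrobenius (GaloisField 2 k) 2 i with hσdef
  have hσ : ∀ x, σ^[k] x = x := by
    intro x
    rw [bf_iter, mul_comm, bf_frob_mul hk0]
  have hfix : ∀ x, σ x = x → x = 0 ∨ x = 1 := bf_fixed hk0 hgcd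
  have hfix2 := bf_fix2 σ hk hσ hfix
  have hadd := bfChi_add hk0
  have hpm := bfChi_pm (k := k)
  have hχσ : ∀ x, bfChi k (σ x) = bfChi k x := by
    intro x
    rw [hσdef, iterateFrobenius_def, bfChi_pow hk0]
  have hχ1 := bfChi_one hk
  have hcard : (Fintype.card (GaloisField 2 k) : ℤ) = 2 ^ k := by
    rw [bf_card hk0]; norm_cast
  have hWeq := bf_walsh_eq (k := k) hk0 i t α
  rw [← hσdef] at hWeq
  have hpt : (2 : ℕ) ^ t ≠ 0 := by positivity
  ext m
  simp only [Set.mem_ofPred_eq, Set.mem_insert_iff, Set.mem_singleton_iff]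
  constructor
  · rintro ⟨a, b, c, d, hcd, rfl⟩
    obtain ⟨γ, rfl⟩ : ∃ γ, γ ^ 2 ^ t = c := by
      obtain ⟨γ, h⟩ := (bijective_iterateFrobenius (GaloisField 2 k) 2 t).2 c
      exact ⟨γ, by rw [← h, iterateFrobenius_def]⟩
    obtain ⟨δ, rfl⟩ : ∃ δ, δ ^ 2 ^ t = d := by
      obtain ⟨δ, h⟩ := (bijective_iterateFrobenius (GaloisField 2 k) 2 t).2 d
      exact ⟨δ, by rw [← h, iterateFrobenius_def]⟩
    have hcd' : ¬ (γ = 0 ∧ δ = 0) := by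
      rintro ⟨rfl, rfl⟩
      exact hcd (by rw [zero_pow hpt])
    have := bf_walsh_value σ (bfChi k) hadd hpm hχσ hχ1 hfix2 α a b γ δ hα0 hα1 hcd'
    rw [← hWeq, hcard] at this
    rw [pow_succ']
    exact this
  · rintro (rfl | rfl | rfl)
    · refine ⟨0, 0, 1, 0, by simp, ?_⟩
      have := hWeq 0 0 1 0
      rw [one_pow, zero_pow hpt, bf_value_zero σ (bfChi k) hadd hpm hχσ hχ1] at this
      rw [this, abs_zero]
    · obtain ⟨c, hc⟩ := bf_exists_bent σ hk hk3 hσ hfix (bf_mono_inj hk0 hgcd) α hα0 hα1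
      refine ⟨0, 0, c ^ 2 ^ t, 1, by simp, ?_⟩
      have := hWeq 0 0 c 1
      rw [one_pow] at this
      rw [this, bf_value_bent σ (bfChi k) hadd hpm hχσ hχ1 α c hc, hcard]
    · refine ⟨1 + α, 1, 1, 0, by simp, ?_⟩
      have := hWeq (1 + α) 1 1 0
      rw [one_pow, zero_pow hpt] at this
      rw [this, bf_value_max σ (bfChi k) hadd hpm hχσ hχ1 hfix2 α hα0 hα1, hcard, pow_succ']
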